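/- First-order approximate solution property of the HJBI equation along the delta hedge and candidate volatility: there exist constants C > 0 and ψ₀ > 0 such that for all (t,s,y) ∈ D and all ψ ∈ (0,ψ₀), |w^ψ_t(t,s,y) + H^ψ(t,s,y; V̄_s(t,s), σ^ψ(t,s,y))| ≤ C ψ². -/

import Mathlib

open Set

/-- The data of the hedging problem with small uncertainty aversion: the constants
`T, K, ε, y_l, y_u`, the reference volatility `σ̄` (`sb`), the reference value `V̄` (`V`)
with its `s`-derivatives `Vs, Vss`, the penalty function `f` with its `ς`-derivatives
`f1, ..., f4`, the utility `U` with derivatives `U1, U2, U3`, and the correction terms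
`w̃` (`wt`) and `ŵ` (`wh`) together with their partial derivatives. -/
structure HedgeData where
  T : ℝ
  K : ℝ
  eps : ℝ
  yl : ℝ
  yu : ℝ
  sb : ℝ → ℝ → ℝ
  V : ℝ → ℝ → ℝ
  Vs : ℝ → ℝ → ℝ
  Vss : ℝ → ℝ → ℝ
  f : ℝ → ℝ → ℝ → ℝ → ℝ
  f1 : ℝ → ℝ → ℝ → ℝ → ℝ
  f2 : ℝ → ℝ → ℝ → ℝ → ℝ
  f3 : ℝ → ℝ → ℝ → ℝ → ℝ
  f4 : ℝ → ℝ → ℝ → ℝ → ℝ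
  U : ℝ → ℝ
  U1 : ℝ → ℝ
  U2 : ℝ → ℝ
  U3 : ℝ → ℝ
  wt : ℝ → ℝ → ℝ → ℝ
  wtT : ℝ → ℝ → ℝ → ℝ
  wtS : ℝ → ℝ → ℝ → ℝ
  wtY : ℝ → ℝ → ℝ → ℝ
  wtSS : ℝ → ℝ → ℝ → ℝ
  wtSY : ℝ → ℝ → ℝ → ℝ
  wtYY : ℝ → ℝ → ℝ → ℝ
  wh : ℝ → ℝ → ℝ → ℝ
  whT : ℝ → ℝ → ℝ → ℝ
  whS : ℝ → ℝ → ℝ → ℝ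
  whY : ℝ → ℝ → ℝ → ℝ
  whSS : ℝ → ℝ → ℝ → ℝ
  whSY : ℝ → ℝ → ℝ → ℝ
  whYY : ℝ → ℝ → ℝ → ℝ

/-- The candidate value function `w^ψ(t,s,y) = U(y) - U'(y) w̃(t,s,y) ψ + U'(y) ŵ(t,s,y) ψ²`. -/
noncomputable def HedgeData.wPsi (d : HedgeData) (ψ t s y : ℝ) : ℝ :=
  d.U y - d.U1 y * d.wt t s y * ψ + d.U1 y * d.wh t s y * ψ ^ 2

/-- Partial derivative `w^ψ_t`. -/
noncomputable def HedgeData.wPsiT (d : HedgeData) (ψ t s y : ℝ) : ℝ :=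
  -(d.U1 y * d.wtT t s y) * ψ + d.U1 y * d.whT t s y * ψ ^ 2

/-- Partial derivative `w^ψ_y`. -/
noncomputable def HedgeData.wPsiY (d : HedgeData) (ψ t s y : ℝ) : ℝ :=
  d.U1 y - (d.U2 y * d.wt t s y + d.U1 y * d.wtY t s y) * ψ
    + (d.U2 y * d.wh t s y + d.U1 y * d.whY t s y) * ψ ^ 2

/-- Partial derivative `w^ψ_ss`. -/
noncomputable def HedgeData.wPsiSS (d : HedgeData) (ψ t s y : ℝ) : ℝ :=
  -(d.U1 y * d.wtSS t s y) * ψ + d.U1 y * d.whSS t s y * ψ ^ 2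

/-- Partial derivative `w^ψ_sy`. -/
noncomputable def HedgeData.wPsiSY (d : HedgeData) (ψ t s y : ℝ) : ℝ :=
  -(d.U2 y * d.wtS t s y + d.U1 y * d.wtSY t s y) * ψ
    + (d.U2 y * d.whS t s y + d.U1 y * d.whSY t s y) * ψ ^ 2

/-- Partial derivative `w^ψ_yy`. -/
noncomputable def HedgeData.wPsiYY (d : HedgeData) (ψ t s y : ℝ) : ℝ :=
  d.U2 y - (d.U3 y * d.wt t s y + 2 * d.U2 y * d.wtY t s y + d.U1 y * d.wtYY t s y) * ψ
    + (d.U3 y * d.wh t s y + 2 * d.U2 y * d.whY t s y + d.U1 y * d.whYY t s y) * ψ ^ 2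

/-- `σ̃(t,s,y) = σ̄(t,s) s² V̄_ss(t,s) / f''(t,s,y;σ̄(t,s))`. -/
noncomputable def HedgeData.sigmaTilde (d : HedgeData) (t s y : ℝ) : ℝ :=
  d.sb t s * s ^ 2 * d.Vss t s / d.f2 t s y (d.sb t s)

/-- `θ̃(t,s,y) = w̃_s(t,s,y) + (U'(y)/U''(y)) w̃_sy(t,s,y)`. -/
noncomputable def HedgeData.thetaTilde (d : HedgeData) (t s y : ℝ) : ℝ :=
  d.wtS t s y + d.U1 y / d.U2 y * d.wtSY t s y

/-- The candidate volatility `σ^ψ = σ̄ + σ̃ ψ`. -/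
noncomputable def HedgeData.sigmaPsi (d : HedgeData) (ψ t s y : ℝ) : ℝ :=
  d.sb t s + d.sigmaTilde t s y * ψ

/-- The candidate strategy `θ^ψ = V̄_s + θ̃ ψ`. -/
noncomputable def HedgeData.thetaPsi (d : HedgeData) (ψ t s y : ℝ) : ℝ :=
  d.Vs t s + d.thetaTilde t s y * ψ

/-- The Hamiltonian `H^ψ(t,s,y;ϑ,ς)`. -/
noncomputable def HedgeData.Ham (d : HedgeData) (ψ t s y ϑ ς : ℝ) : ℝ :=
  1 / ψ * d.U1 y * d.f t s y ς
    + 1 / 2 * s ^ 2 * d.Vss t s * ((d.sb t s) ^ 2 - ς ^ 2) * d.wPsiY ψ t s y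
    + 1 / 2 * ς ^ 2 * s ^ 2 *
      (d.wPsiSS ψ t s y + 2 * (ϑ - d.Vs t s) * d.wPsiSY ψ t s y
        + (ϑ - d.Vs t s) ^ 2 * d.wPsiYY ψ t s y)

/-- The standing assumptions (Assumption 3.1 of the paper). -/
structure HedgeData.Assumptions (d : HedgeData) : Prop where
  hT : 0 < d.T
  hK : 1 < d.K
  heps : 0 < d.eps
  hy : d.yl < d.yu
  sb_mem : ∀ t ∈ Icc (0:ℝ) d.T, ∀ s ∈ Icc d.K⁻¹ d.K, d.sb t s ∈ Icc (0:ℝ) d.K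
  sb_lb : ∀ t ∈ Icc (0:ℝ) d.T, ∀ s ∈ Ioo d.K⁻¹ d.K, d.eps ≤ d.sb t s
  sb_ub : ∀ t ∈ Icc (0:ℝ) d.T, ∀ s ∈ Ioo d.K⁻¹ d.K, d.sb t s ≤ d.K - d.eps
  sb_bdry : ∀ t ∈ Icc (0:ℝ) d.T, d.sb t d.K⁻¹ = 0 ∧ d.sb t d.K = 0
  V_derivS : ∀ t ∈ Ioo (0:ℝ) d.T, ∀ s ∈ Ioo d.K⁻¹ d.K, HasDerivAt (d.V t) (d.Vs t s) s
  V_derivSS : ∀ t ∈ Ioo (0:ℝ) d.T, ∀ s ∈ Ioo d.K⁻¹ d.K, HasDerivAt (d.Vs t) (d.Vss t s) s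
  Vss_cont : ∀ t ∈ Ioo (0:ℝ) d.T, ContinuousOn (d.Vss t) (Ioo d.K⁻¹ d.K)
  Vss_bdd : ∀ t ∈ Ioo (0:ℝ) d.T, ∀ s ∈ Ioo d.K⁻¹ d.K, |s ^ 2 * d.Vss t s| ≤ d.K
  f_deriv1 : ∀ t s y ς : ℝ, HasDerivAt (d.f t s y) (d.f1 t s y ς) ς
  f_deriv2 : ∀ t s y ς : ℝ, HasDerivAt (d.f1 t s y) (d.f2 t s y ς) ς
  f_deriv3 : ∀ t s y ς : ℝ, HasDerivAt (d.f2 t s y) (d.f3 t s y ς) ς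
  f_deriv4 : ∀ t s y ς : ℝ, HasDerivAt (d.f3 t s y) (d.f4 t s y ς) ς
  f4_cont : ∀ t s y : ℝ, Continuous (d.f4 t s y)
  f_nonneg : ∀ t s y ς : ℝ, 0 ≤ ς → 0 ≤ d.f t s y ς
  f_min : ∀ t ∈ Ioo (0:ℝ) d.T, ∀ s ∈ Ioo d.K⁻¹ d.K, ∀ y ∈ Ioo d.yl d.yu,
    d.f t s y (d.sb t s) = 0 ∧ d.f1 t s y (d.sb t s) = 0
  f2_bdd : ∀ t ∈ Ioo (0:ℝ) d.T, ∀ s ∈ Ioo d.K⁻¹ d.K, ∀ y ∈ Ioo d.yl d.yu,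
    ∀ ς ∈ Icc (0:ℝ) d.K, 1 / d.K ≤ d.f2 t s y ς ∧ d.f2 t s y ς ≤ d.K
  f34_bdd : ∀ t ∈ Ioo (0:ℝ) d.T, ∀ s ∈ Ioo d.K⁻¹ d.K, ∀ y ∈ Ioo d.yl d.yu,
    ∀ ς ∈ Icc (0:ℝ) d.K, |d.f3 t s y ς| ≤ d.K ∧ |d.f4 t s y ς| ≤ d.K
  U_deriv1 : ∀ y : ℝ, HasDerivAt d.U (d.U1 y) y
  U_deriv2 : ∀ y : ℝ, HasDerivAt d.U1 (d.U2 y) y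
  U_deriv3 : ∀ y : ℝ, HasDerivAt d.U2 (d.U3 y) y
  U3_cont : Continuous d.U3
  U1_pos : ∀ y : ℝ, 0 < d.U1 y
  U2_neg : ∀ y : ℝ, d.U2 y < 0
  wt_cont : ContinuousOn (fun p : ℝ × ℝ × ℝ => d.wt p.1 p.2.1 p.2.2)
    (Icc 0 d.T ×ˢ Icc d.K⁻¹ d.K ×ˢ Icc d.yl d.yu)
  wh_cont : ContinuousOn (fun p : ℝ × ℝ × ℝ => d.wh p.1 p.2.1 p.2.2)
    (Icc 0 d.T ×ˢ Icc d.K⁻¹ d.K ×ˢ Icc d.yl d.yu)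
  wt_deriv : ∀ t ∈ Ioo (0:ℝ) d.T, ∀ s ∈ Ioo d.K⁻¹ d.K, ∀ y ∈ Ioo d.yl d.yu,
    HasDerivAt (fun t' => d.wt t' s y) (d.wtT t s y) t ∧
    HasDerivAt (fun s' => d.wt t s' y) (d.wtS t s y) s ∧
    HasDerivAt (fun y' => d.wt t s y') (d.wtY t s y) y ∧
    HasDerivAt (fun s' => d.wtS t s' y) (d.wtSS t s y) s ∧
    HasDerivAt (fun y' => d.wtS t s y') (d.wtSY t s y) y ∧
    HasDerivAt (fun y' => d.wtY t s y') (d.wtYY t s y) y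
  wh_deriv : ∀ t ∈ Ioo (0:ℝ) d.T, ∀ s ∈ Ioo d.K⁻¹ d.K, ∀ y ∈ Ioo d.yl d.yu,
    HasDerivAt (fun t' => d.wh t' s y) (d.whT t s y) t ∧
    HasDerivAt (fun s' => d.wh t s' y) (d.whS t s y) s ∧
    HasDerivAt (fun y' => d.wh t s y') (d.whY t s y) y ∧
    HasDerivAt (fun s' => d.whS t s' y) (d.whSS t s y) s ∧
    HasDerivAt (fun y' => d.whS t s y') (d.whSY t s y) y ∧
    HasDerivAt (fun y' => d.whY t s y') (d.whYY t s y) y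
  wt_deriv_cont : ∀ g ∈ [d.wtT, d.wtS, d.wtY, d.wtSS, d.wtSY, d.wtYY],
    ContinuousOn (fun p : ℝ × ℝ × ℝ => g p.1 p.2.1 p.2.2)
      (Ioo 0 d.T ×ˢ Ioo d.K⁻¹ d.K ×ˢ Ioo d.yl d.yu)
  wh_deriv_cont : ∀ g ∈ [d.whT, d.whS, d.whY, d.whSS, d.whSY, d.whYY],
    ContinuousOn (fun p : ℝ × ℝ × ℝ => g p.1 p.2.1 p.2.2)
      (Ioo 0 d.T ×ˢ Ioo d.K⁻¹ d.K ×ˢ Ioo d.yl d.yu)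
  wt_bdd : ∀ g ∈ [d.wtT, d.wtS, d.wtY, d.wtSS, d.wtSY, d.wtYY],
    ∀ t ∈ Ioo (0:ℝ) d.T, ∀ s ∈ Ioo d.K⁻¹ d.K, ∀ y ∈ Ioo d.yl d.yu, |g t s y| ≤ d.K
  wh_bdd : ∀ g ∈ [d.whT, d.whS, d.whY, d.whSS, d.whSY, d.whYY],
    ∀ t ∈ Ioo (0:ℝ) d.T, ∀ s ∈ Ioo d.K⁻¹ d.K, ∀ y ∈ Ioo d.yl d.yu, |g t s y| ≤ d.K

/-- The PDEs (with source terms `g̃` and `ĝ`) and terminal/boundary conditions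
satisfied by the correction terms `w̃` and `ŵ`. -/
structure HedgeData.PDEAssumptions (d : HedgeData) : Prop where
  pde_wt : ∀ t ∈ Ioo (0:ℝ) d.T, ∀ s ∈ Ioo d.K⁻¹ d.K, ∀ y ∈ Ioo d.yl d.yu,
    d.wtT t s y + 1 / 2 * (d.sb t s) ^ 2 * s ^ 2 * d.wtSS t s y
      + (d.sb t s * s ^ 2 * d.Vss t s) ^ 2 / (2 * d.f2 t s y (d.sb t s)) = 0
  pde_wh : ∀ t ∈ Ioo (0:ℝ) d.T, ∀ s ∈ Ioo d.K⁻¹ d.K, ∀ y ∈ Ioo d.yl d.yu,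
    d.whT t s y + 1 / 2 * (d.sb t s) ^ 2 * s ^ 2 * d.whSS t s y
      + (1 / 6 * d.sigmaTilde t s y ^ 3 * d.f3 t s y (d.sb t s)
        - 1 / 2 * d.sigmaTilde t s y ^ 2 * s ^ 2 * d.Vss t s
        + d.sigmaTilde t s y * d.sb t s * s ^ 2
            * (d.Vss t s * d.wtY t s y - d.wtSS t s y)
        - d.U2 y / d.U1 y * (1 / 2 * (d.sb t s) ^ 2 * s ^ 2 * d.thetaTilde t s y ^ 2
            - d.sigmaTilde t s y ^ 2 * d.f2 t s y (d.sb t s) * d.wt t s y)) = 0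
  bc_T : ∀ s ∈ Ioo d.K⁻¹ d.K, ∀ y ∈ Ioo d.yl d.yu, d.wt d.T s y = 0 ∧ d.wh d.T s y = 0
  bc_S : ∀ t ∈ Ioo (0:ℝ) d.T, ∀ y ∈ Ioo d.yl d.yu,
    d.wt t d.K⁻¹ y = 0 ∧ d.wt t d.K y = 0 ∧ d.wh t d.K⁻¹ y = 0 ∧ d.wh t d.K y = 0

/-!
All estimates are uniform on `D` as `ψ ↓ 0`. Since `ϑ = V̄_s`, the `w_sy` and `w_yy` terms of the
Hamiltonian vanish, and with `v = s² V̄_ss` and `f'' = f''(σ̄)` what is left expands as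
`(1/ψ) U' f(σ^ψ) = ½ U' f'' σ̃² ψ + O(ψ²)`, `½ v (σ̄² - (σ^ψ)²) w_y = - σ̄ σ̃ v U' ψ + O(ψ²)`,
`½ (σ^ψ)² s² w_ss = - ½ σ̄² s² U' w̃_ss ψ + O(ψ²)` and `w_t = - U' w̃_t ψ + O(ψ²)`.
As `f'' σ̃ = σ̄ v`, the coefficient of `ψ` is `-U'` times the left-hand side of the PDE for `w̃`.
-/

section Taylor

variable {E : Type*} [NormedAddCommGroup E] [NormedSpace ℝ E] {S : Set ℝ} {a x C : ℝ}

theorem norm_le_mul_pow_succ_of_hasDerivWithinAt {g g' : ℝ → E} {n : ℕ} (hS : Convex ℝ S)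
    (ha : a ∈ S) (hg : ∀ z ∈ S, HasDerivWithinAt g (g' z) S z) (hga : g a = 0) (hC : 0 ≤ C)
    (hbound : ∀ z ∈ S, ‖g' z‖ ≤ C * |z - a| ^ n) (hx : x ∈ S) :
    ‖g x‖ ≤ C * |x - a| ^ (n + 1) := by
  have hsub : uIcc a x ⊆ S := hS.ordConnected.uIcc_subset ha hx
  have hbound' : ∀ z ∈ uIcc a x, ‖g' z‖ ≤ C * |x - a| ^ n := fun z hz => by
    have hza : |z - a| ≤ |x - a| := abs_sub_left_of_mem_uIcc hz
    exact (hbound z (hsub hz)).trans (by gcongr)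
  have hmvt := (convex_uIcc a x).norm_image_sub_le_of_norm_hasDerivWithin_le
    (fun z hz => (hg z (hsub hz)).mono hsub) hbound' left_mem_uIcc right_mem_uIcc
  rwa [hga, sub_zero, Real.norm_eq_abs, mul_assoc, ← pow_succ] at hmvt

theorem norm_sub_taylor_two_le {f f₁ f₂ f₃ : ℝ → E} (hS : Convex ℝ S) (ha : a ∈ S)
    (hf : ∀ z ∈ S, HasDerivWithinAt f (f₁ z) S z) (hf₁ : ∀ z ∈ S, HasDerivWithinAt f₁ (f₂ z) S z)
    (hf₂ : ∀ z ∈ S, HasDerivWithinAt f₂ (f₃ z) S z) (hf₃ : ∀ z ∈ S, ‖f₃ z‖ ≤ C) (hx : x ∈ S) :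
    ‖f x - (f a + (x - a) • f₁ a + ((x - a) ^ 2 / 2) • f₂ a)‖ ≤ C * |x - a| ^ 3 := by
  have hC : 0 ≤ C := (norm_nonneg _).trans (hf₃ a ha)
  have hlin (z : ℝ) : HasDerivWithinAt (fun z => z - a) 1 S z :=
    (hasDerivWithinAt_id z S).sub_const a
  have order_zero : ∀ z ∈ S, ‖f₂ z - f₂ a‖ ≤ C * |z - a| ^ 1 := fun z hz =>
    norm_le_mul_pow_succ_of_hasDerivWithinAt hS ha (fun w hw => (hf₂ w hw).sub_const _)
      (sub_self _) hC (by simpa only [pow_zero, mul_one] using hf₃) hz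
  have order_one : ∀ z ∈ S, ‖f₁ z - (f₁ a + (z - a) • f₂ a)‖ ≤ C * |z - a| ^ 2 := fun z hz =>
    norm_le_mul_pow_succ_of_hasDerivWithinAt hS ha
      (fun w hw => ((hf₁ w hw).sub (((hlin w).smul_const (f₂ a)).const_add (f₁ a))))
      (by simp) hC (by simpa only [one_smul] using order_zero) hz
  refine norm_le_mul_pow_succ_of_hasDerivWithinAt hS ha (fun w hw => (hf w hw).sub
    ((((hlin w).smul_const (f₁ a)).const_add (f a)).add
      ((((hlin w).pow 2).div_const 2).smul_const (f₂ a)))) (by simp) hC ?_ hx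
  simpa [mul_div_cancel_left₀] using order_one

end Taylor

section Expansions

open Asymptotics Filter Topology

variable {α : Type*} {l : Filter α}

theorem isBigO_sub_taylor_two {F F₁ F₂ F₃ : α → ℝ → ℝ} {a h : α → ℝ} {δ M : ℝ} (hδ : 0 < δ)
    (hF : ∀ x z, HasDerivAt (F x) (F₁ x z) z) (hF₁ : ∀ x z, HasDerivAt (F₁ x) (F₂ x z) z)
    (hF₂ : ∀ x z, HasDerivAt (F₂ x) (F₃ x z) z)
    (hF₃ : ∀ᶠ x in l, ∀ z, |z - a x| ≤ δ → |F₃ x z| ≤ M) (hh : Tendsto h l (𝓝 0)) :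
    (fun x => F x (a x + h x) - (F x (a x) + h x * F₁ x (a x) + h x ^ 2 / 2 * F₂ x (a x)))
      =O[l] fun x => h x ^ 3 := by
  have hsmall : ∀ᶠ x in l, h x ∈ Metric.closedBall 0 δ := hh (Metric.closedBall_mem_nhds 0 hδ)
  refine .of_bound M ?_
  filter_upwards [hF₃, hsmall] with x hbound hhx
  have htaylor := norm_sub_taylor_two_le (convex_closedBall (a x) δ)
    (Metric.mem_closedBall_self hδ.le) (fun z _ => (hF x z).hasDerivWithinAt)
    (fun z _ => (hF₁ x z).hasDerivWithinAt) (fun z _ => (hF₂ x z).hasDerivWithinAt)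
    hbound (x := a x + h x) (by simpa using hhx)
  simpa using htaylor

variable {ψ a b u w : α → ℝ}

theorem isBigO_mul_of_isBigO_one (ha : a =O[l] fun _ => (1 : ℝ)) (hb : b =O[l] u) :
    (fun x => a x * b x) =O[l] u := by
  simpa only [one_mul] using ha.mul hb

theorem isBigO_one_div_mul_sub_quadratic {p q : α → ℝ} (hψ : ∀ᶠ x in l, ψ x ≠ 0)
    (hp : (fun x => p x - q x * ψ x ^ 2) =O[l] fun x => ψ x ^ 3) :
    (fun x => 1 / ψ x * p x - q x * ψ x) =O[l] fun x => ψ x ^ 2 := by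
  refine ((isBigO_refl (fun x => 1 / ψ x) l).mul hp).congr' ?_ ?_ <;>
    filter_upwards [hψ] with x hx <;> field_simp

theorem isBigO_sq_sub_sq_mul_add (hψ : ψ =O[l] fun _ => (1 : ℝ)) (ha : a =O[l] fun _ => (1 : ℝ))
    (hb : b =O[l] fun _ => (1 : ℝ)) (hu : u =O[l] fun _ => (1 : ℝ))
    (hw : (fun x => w x - u x) =O[l] ψ) :
    (fun x => (a x ^ 2 - (a x + b x * ψ x) ^ 2) * w x + 2 * a x * b x * u x * ψ x)
      =O[l] fun x => ψ x ^ 2 := by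
  have hw_one : w =O[l] fun _ => (1 : ℝ) := ((hw.trans hψ).add hu).congr_left fun x => by ring
  have hquad : (fun x => b x * (b x * (w x * ψ x ^ 2))) =O[l] fun x => ψ x ^ 2 :=
    isBigO_mul_of_isBigO_one hb (isBigO_mul_of_isBigO_one hb
      (isBigO_mul_of_isBigO_one hw_one (isBigO_refl _ _)))
  have hcross : (fun x => a x * (b x * ((w x - u x) * ψ x))) =O[l] fun x => ψ x ^ 2 :=
    isBigO_mul_of_isBigO_one ha (isBigO_mul_of_isBigO_one hb
      ((hw.mul (isBigO_refl ψ l)).congr_right fun x => (sq (ψ x)).symm))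
  exact (hquad.add (hcross.const_mul_left 2)).neg_left.congr_left fun x => by ring

theorem isBigO_sq_mul_sub (hψ : ψ =O[l] fun _ => (1 : ℝ)) (ha : a =O[l] fun _ => (1 : ℝ))
    (hb : b =O[l] fun _ => (1 : ℝ)) (hu : u =O[l] fun _ => (1 : ℝ))
    (hw : (fun x => w x - u x * ψ x) =O[l] fun x => ψ x ^ 2) :
    (fun x => (a x + b x * ψ x) ^ 2 * w x - a x ^ 2 * u x * ψ x) =O[l] fun x => ψ x ^ 2 := by
  have hbψ : (fun x => b x * ψ x) =O[l] fun _ => (1 : ℝ) := isBigO_mul_of_isBigO_one hb hψ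
  have herror : (fun x => (a x + b x * ψ x) * ((a x + b x * ψ x) * (w x - u x * ψ x)))
      =O[l] fun x => ψ x ^ 2 :=
    isBigO_mul_of_isBigO_one (ha.add hbψ) (isBigO_mul_of_isBigO_one (ha.add hbψ) hw)
  have hcross : (fun x => (2 * a x + b x * ψ x) * (b x * (u x * ψ x ^ 2)))
      =O[l] fun x => ψ x ^ 2 :=
    isBigO_mul_of_isBigO_one ((ha.const_mul_left 2).add hbψ) (isBigO_mul_of_isBigO_one hb
      (isBigO_mul_of_isBigO_one hu (isBigO_refl _ _)))
  exact (herror.add hcross).congr_left fun x => by ring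

theorem exists_forall_abs_le_of_isBigO_principal_prod {β : Type*} {D : Set β} {g : β → ℝ → ℝ}
    {n : ℕ} (hg : (fun q : β × ℝ => g q.1 q.2) =O[𝓟 D ×ˢ 𝓝[>] 0] fun q => q.2 ^ n) :
    ∃ C > 0, ∃ ψ₀ > 0, ∀ p ∈ D, ∀ ψ ∈ Ioo 0 ψ₀, |g p ψ| ≤ C * ψ ^ n := by
  obtain ⟨C, hC, hbound⟩ := hg.exists_pos
  obtain ⟨ψ₀, hψ₀, hsub⟩ :=
    (((hasBasis_principal D).prod (nhdsGT_basis (0 : ℝ))).eventually_iff).1 hbound.bound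
  refine ⟨C, hC, ψ₀.2, hψ₀.2, fun p hp ψ hψ => ?_⟩
  simpa [abs_of_pos hψ.1] using hsub (x := (p, ψ)) ⟨hp, hψ⟩

end Expansions

namespace HedgeData

open Asymptotics Filter Topology

variable {d : HedgeData}

/-- The domain `D = (0,T) × (1/K,K) × (y_l,y_u)`. -/
def domain (d : HedgeData) : Set (ℝ × ℝ × ℝ) :=
  Ioo 0 d.T ×ˢ Ioo d.K⁻¹ d.K ×ˢ Ioo d.yl d.yu

/-- The regime `ψ ↓ 0` of small uncertainty aversion, uniformly over `(t, s, y) ∈ D`; a point of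
the underlying space is `((t, s, y), ψ)`. -/
def smallAversion (d : HedgeData) : Filter ((ℝ × ℝ × ℝ) × ℝ) :=
  𝓟 d.domain ×ˢ 𝓝[>] 0

/-- Boundedness on `D`, the standing regularity requirement
on the coefficients; the bound need not be `K`. -/
def BoundedOnDomain (d : HedgeData) (g : ℝ → ℝ → ℝ → ℝ) : Prop :=
  ∃ M, ∀ t ∈ Ioo (0 : ℝ) d.T, ∀ s ∈ Ioo d.K⁻¹ d.K, ∀ y ∈ Ioo d.yl d.yu, |g t s y| ≤ M

/-- The conditions under which the candidate `w^ψ` solves the HJBI equation to first order in `ψ`: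
bounded coefficients, a penalty with a uniformly nondegenerate minimum at `σ̄` and bounded third
derivative in a uniform neighbourhood of `σ̄`, and the PDE for `w̃`. -/
structure FirstOrderAssumptions (d : HedgeData) : Prop where
  V_derivS : ∀ t ∈ Ioo (0 : ℝ) d.T, ∀ s ∈ Ioo d.K⁻¹ d.K, HasDerivAt (d.V t) (d.Vs t s) s
  V_derivSS : ∀ t ∈ Ioo (0 : ℝ) d.T, ∀ s ∈ Ioo d.K⁻¹ d.K, HasDerivAt (d.Vs t) (d.Vss t s) s
  f_deriv1 : ∀ t s y ς : ℝ, HasDerivAt (d.f t s y) (d.f1 t s y ς) ς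
  f_deriv2 : ∀ t s y ς : ℝ, HasDerivAt (d.f1 t s y) (d.f2 t s y ς) ς
  f_deriv3 : ∀ t s y ς : ℝ, HasDerivAt (d.f2 t s y) (d.f3 t s y ς) ς
  U_deriv1 : ∀ y : ℝ, HasDerivAt d.U (d.U1 y) y
  U_deriv2 : ∀ y : ℝ, HasDerivAt d.U1 (d.U2 y) y
  U_deriv3 : ∀ y : ℝ, HasDerivAt d.U2 (d.U3 y) y
  wt_deriv : ∀ t ∈ Ioo (0 : ℝ) d.T, ∀ s ∈ Ioo d.K⁻¹ d.K, ∀ y ∈ Ioo d.yl d.yu,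
    HasDerivAt (fun t' => d.wt t' s y) (d.wtT t s y) t ∧
    HasDerivAt (fun s' => d.wt t s' y) (d.wtS t s y) s ∧
    HasDerivAt (fun y' => d.wt t s y') (d.wtY t s y) y ∧
    HasDerivAt (fun s' => d.wtS t s' y) (d.wtSS t s y) s ∧
    HasDerivAt (fun y' => d.wtS t s y') (d.wtSY t s y) y ∧
    HasDerivAt (fun y' => d.wtY t s y') (d.wtYY t s y) y
  wh_deriv : ∀ t ∈ Ioo (0 : ℝ) d.T, ∀ s ∈ Ioo d.K⁻¹ d.K, ∀ y ∈ Ioo d.yl d.yu,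
    HasDerivAt (fun t' => d.wh t' s y) (d.whT t s y) t ∧
    HasDerivAt (fun s' => d.wh t s' y) (d.whS t s y) s ∧
    HasDerivAt (fun y' => d.wh t s y') (d.whY t s y) y ∧
    HasDerivAt (fun s' => d.whS t s' y) (d.whSS t s y) s ∧
    HasDerivAt (fun y' => d.whS t s y') (d.whSY t s y) y ∧
    HasDerivAt (fun y' => d.whY t s y') (d.whYY t s y) y
  sb_bdd : d.BoundedOnDomain fun t s _ => d.sb t s
  Vss_bdd : d.BoundedOnDomain fun t s _ => s ^ 2 * d.Vss t s
  f_min : ∀ t ∈ Ioo (0 : ℝ) d.T, ∀ s ∈ Ioo d.K⁻¹ d.K, ∀ y ∈ Ioo d.yl d.yu,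
    d.f t s y (d.sb t s) = 0 ∧ d.f1 t s y (d.sb t s) = 0
  f2_lb : ∃ c > 0, ∀ t ∈ Ioo (0 : ℝ) d.T, ∀ s ∈ Ioo d.K⁻¹ d.K, ∀ y ∈ Ioo d.yl d.yu,
    c ≤ d.f2 t s y (d.sb t s)
  f3_bdd : ∃ δ > 0, ∃ M, ∀ t ∈ Ioo (0 : ℝ) d.T, ∀ s ∈ Ioo d.K⁻¹ d.K, ∀ y ∈ Ioo d.yl d.yu,
    ∀ ς, |ς - d.sb t s| ≤ δ → |d.f3 t s y ς| ≤ M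
  wt_bdd : d.BoundedOnDomain d.wt
  wtY_bdd : d.BoundedOnDomain d.wtY
  wtSS_bdd : d.BoundedOnDomain d.wtSS
  wh_bdd : d.BoundedOnDomain d.wh
  whT_bdd : d.BoundedOnDomain d.whT
  whY_bdd : d.BoundedOnDomain d.whY
  whSS_bdd : d.BoundedOnDomain d.whSS
  pde_wt : ∀ t ∈ Ioo (0 : ℝ) d.T, ∀ s ∈ Ioo d.K⁻¹ d.K, ∀ y ∈ Ioo d.yl d.yu,
    d.wtT t s y + 1 / 2 * d.sb t s ^ 2 * s ^ 2 * d.wtSS t s y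
      + (d.sb t s * s ^ 2 * d.Vss t s) ^ 2 / (2 * d.f2 t s y (d.sb t s)) = 0

/-- The left-hand side of the HJBI equation along the delta hedge `ϑ = V̄_s` and the candidate
volatility `ς = σ^ψ`, with `w^ψ` in place of the value function. -/
noncomputable def deltaHedgeResidual (d : HedgeData) (ψ t s y : ℝ) : ℝ :=
  d.wPsiT ψ t s y + d.Ham ψ t s y (d.Vs t s) (d.sigmaPsi ψ t s y)

theorem boundedOnDomain_of_continuousOn {g : ℝ → ℝ → ℝ → ℝ}
    (hg : ContinuousOn (fun p : ℝ × ℝ × ℝ => g p.1 p.2.1 p.2.2)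
      (Icc 0 d.T ×ˢ Icc d.K⁻¹ d.K ×ˢ Icc d.yl d.yu)) : d.BoundedOnDomain g := by
  have hcompact : IsCompact (Icc 0 d.T ×ˢ Icc d.K⁻¹ d.K ×ˢ Icc d.yl d.yu) :=
    isCompact_Icc.prod (isCompact_Icc.prod isCompact_Icc)
  obtain ⟨M, hM⟩ := hcompact.exists_bound_of_continuousOn hg
  exact ⟨M, fun t ht s hs y hy => hM (t, s, y)
    ⟨Ioo_subset_Icc_self ht, Ioo_subset_Icc_self hs, Ioo_subset_Icc_self hy⟩⟩

theorem boundedOnDomain_sq (d : HedgeData) : d.BoundedOnDomain fun _ s _ => s ^ 2 :=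
  boundedOnDomain_of_continuousOn (by fun_prop)

theorem boundedOnDomain_of_continuous {u : ℝ → ℝ} (hu : Continuous u) :
    d.BoundedOnDomain fun _ _ y => u y :=
  boundedOnDomain_of_continuousOn (by fun_prop)

theorem eventually_smallAversion_of_forall {P : ℝ → ℝ → ℝ → Prop}
    (hP : ∀ t ∈ Ioo (0 : ℝ) d.T, ∀ s ∈ Ioo d.K⁻¹ d.K, ∀ y ∈ Ioo d.yl d.yu, P t s y) :
    ∀ᶠ q in d.smallAversion, P q.1.1 q.1.2.1 q.1.2.2 :=
  tendsto_fst.eventually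
    (eventually_principal.2 fun p (hp : p ∈ d.domain) =>
      hP p.1 hp.1 p.2.1 hp.2.1 p.2.2 hp.2.2)

theorem eventually_smallAversion_pos (d : HedgeData) : ∀ᶠ q in d.smallAversion, 0 < q.2 :=
  tendsto_snd.eventually self_mem_nhdsWithin

theorem tendsto_smallAversion (d : HedgeData) :
    Tendsto (fun q => q.2) d.smallAversion (𝓝 0) :=
  tendsto_snd.mono_right nhdsWithin_le_nhds

theorem smallAversion_isBigO_one (d : HedgeData) :
    (fun q => q.2) =O[d.smallAversion] fun _ => (1 : ℝ) :=
  d.tendsto_smallAversion.isBigO_one ℝ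

theorem BoundedOnDomain.isBigO_one {g : ℝ → ℝ → ℝ → ℝ} (hg : d.BoundedOnDomain g) :
    (fun q => g q.1.1 q.1.2.1 q.1.2.2) =O[d.smallAversion] fun _ => (1 : ℝ) := by
  obtain ⟨M, hM⟩ := hg
  refine .of_bound M ((eventually_smallAversion_of_forall hM).mono fun q hq => ?_)
  simpa using hq

theorem Ham_Vs (d : HedgeData) (ψ t s y ς : ℝ) :
    d.Ham ψ t s y (d.Vs t s) ς = 1 / ψ * d.U1 y * d.f t s y ς
      + 1 / 2 * s ^ 2 * d.Vss t s * (d.sb t s ^ 2 - ς ^ 2) * d.wPsiY ψ t s y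
      + 1 / 2 * ς ^ 2 * s ^ 2 * d.wPsiSS ψ t s y := by
  rw [Ham]
  ring

theorem wtT_eq_of_pde {t s y : ℝ} (hf2 : d.f2 t s y (d.sb t s) ≠ 0)
    (hpde : d.wtT t s y + 1 / 2 * d.sb t s ^ 2 * s ^ 2 * d.wtSS t s y
      + (d.sb t s * s ^ 2 * d.Vss t s) ^ 2 / (2 * d.f2 t s y (d.sb t s)) = 0) :
    d.wtT t s y = -(1 / 2 * d.sb t s ^ 2 * s ^ 2 * d.wtSS t s y)
      - (d.sb t s * (s ^ 2 * d.Vss t s) * d.sigmaTilde t s y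
        - 1 / 2 * d.f2 t s y (d.sb t s) * d.sigmaTilde t s y ^ 2) := by
  have hsource : (d.sb t s * s ^ 2 * d.Vss t s) ^ 2 / (2 * d.f2 t s y (d.sb t s))
      = d.sb t s * (s ^ 2 * d.Vss t s) * d.sigmaTilde t s y
        - 1 / 2 * d.f2 t s y (d.sb t s) * d.sigmaTilde t s y ^ 2 := by
    rw [sigmaTilde]
    field_simp
    ring
  linarith

namespace FirstOrderAssumptions

theorem sigmaTilde_bdd (hd : d.FirstOrderAssumptions) :
    d.BoundedOnDomain d.sigmaTilde := by
  obtain ⟨M₁, hM₁⟩ := hd.sb_bdd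
  obtain ⟨M₂, hM₂⟩ := hd.Vss_bdd
  obtain ⟨c, hc, hf2⟩ := hd.f2_lb
  refine ⟨M₁ * M₂ / c, fun t ht s hs y hy => ?_⟩
  have hsb := hM₁ t ht s hs y hy
  have hVss := hM₂ t ht s hs y hy
  have hf2' := hf2 t ht s hs y hy
  have hM₁_nonneg : 0 ≤ M₁ := (abs_nonneg _).trans hsb
  have hM₂_nonneg : 0 ≤ M₂ := (abs_nonneg _).trans hVss
  rw [sigmaTilde, mul_assoc, abs_div, abs_mul, abs_of_pos (hc.trans_le hf2')]
  gcongr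

theorem U1_bdd (hd : d.FirstOrderAssumptions) : d.BoundedOnDomain fun _ _ y => d.U1 y :=
  boundedOnDomain_of_continuous
    (continuous_iff_continuousAt.2 fun y => (hd.U_deriv2 y).continuousAt)

theorem U2_bdd (hd : d.FirstOrderAssumptions) : d.BoundedOnDomain fun _ _ y => d.U2 y :=
  boundedOnDomain_of_continuous
    (continuous_iff_continuousAt.2 fun y => (hd.U_deriv3 y).continuousAt)

theorem wPsiY_sub_isBigO (hd : d.FirstOrderAssumptions) :
    (fun q => d.wPsiY q.2 q.1.1 q.1.2.1 q.1.2.2 - d.U1 q.1.2.2) =O[d.smallAversion]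
      fun q => q.2 := by
  have hU1 := hd.U1_bdd.isBigO_one
  have hU2 := hd.U2_bdd.isBigO_one
  have hwt := (isBigO_mul_of_isBigO_one hU2 hd.wt_bdd.isBigO_one).add
    (isBigO_mul_of_isBigO_one hU1 hd.wtY_bdd.isBigO_one)
  have hwh := (isBigO_mul_of_isBigO_one hU2 hd.wh_bdd.isBigO_one).add
    (isBigO_mul_of_isBigO_one hU1 hd.whY_bdd.isBigO_one)
  have hslope := (isBigO_mul_of_isBigO_one hwh d.smallAversion_isBigO_one).sub hwt
  refine (isBigO_mul_of_isBigO_one hslope (isBigO_refl (fun q => q.2) _)).congr_left fun q => ?_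
  rw [wPsiY]
  ring

theorem wPsiSS_sub_isBigO (hd : d.FirstOrderAssumptions) :
    (fun q => d.wPsiSS q.2 q.1.1 q.1.2.1 q.1.2.2
      - -(d.U1 q.1.2.2 * d.wtSS q.1.1 q.1.2.1 q.1.2.2) * q.2) =O[d.smallAversion]
      fun q => q.2 ^ 2 := by
  have hcoeff := isBigO_mul_of_isBigO_one hd.U1_bdd.isBigO_one hd.whSS_bdd.isBigO_one
  refine (isBigO_mul_of_isBigO_one hcoeff (isBigO_refl (fun q => q.2 ^ 2) _)).congr_left
    fun q => ?_
  rw [wPsiSS]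
  ring

theorem penalty_sub_isBigO (hd : d.FirstOrderAssumptions) :
    (fun q => 1 / q.2 * d.f q.1.1 q.1.2.1 q.1.2.2 (d.sigmaPsi q.2 q.1.1 q.1.2.1 q.1.2.2)
      - 1 / 2 * d.f2 q.1.1 q.1.2.1 q.1.2.2 (d.sb q.1.1 q.1.2.1)
        * d.sigmaTilde q.1.1 q.1.2.1 q.1.2.2 ^ 2 * q.2) =O[d.smallAversion]
      fun q => q.2 ^ 2 := by
  obtain ⟨δ, hδ, M, hM⟩ := hd.f3_bdd
  have hσ := hd.sigmaTilde_bdd.isBigO_one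
  have hstep : Tendsto (fun q => d.sigmaTilde q.1.1 q.1.2.1 q.1.2.2 * q.2) d.smallAversion (𝓝 0) :=
    (hσ.mul (isBigO_refl (fun q => q.2) _)).trans_tendsto
      (by simpa using d.tendsto_smallAversion)
  have htaylor := isBigO_sub_taylor_two hδ
    (fun q : (ℝ × ℝ × ℝ) × ℝ => hd.f_deriv1 q.1.1 q.1.2.1 q.1.2.2)
    (fun q => hd.f_deriv2 q.1.1 q.1.2.1 q.1.2.2) (fun q => hd.f_deriv3 q.1.1 q.1.2.1 q.1.2.2)
    (a := fun q => d.sb q.1.1 q.1.2.1) (eventually_smallAversion_of_forall hM) hstep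
  have hcube : (fun q => (d.sigmaTilde q.1.1 q.1.2.1 q.1.2.2 * q.2) ^ 3) =O[d.smallAversion]
      fun q => q.2 ^ 3 := by
    simpa using (hσ.mul (isBigO_refl (fun q => q.2) _)).pow 3
  refine isBigO_one_div_mul_sub_quadratic (d.eventually_smallAversion_pos.mono fun q hq => hq.ne')
    ((htaylor.trans hcube).congr' ?_ .rfl)
  filter_upwards [eventually_smallAversion_of_forall hd.f_min] with q hq
  rw [hq.1, hq.2, sigmaPsi]
  ring

theorem deltaHedgeResidual_isBigO (hd : d.FirstOrderAssumptions) :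
    (fun q => d.deltaHedgeResidual q.2 q.1.1 q.1.2.1 q.1.2.2) =O[d.smallAversion]
      fun q => q.2 ^ 2 := by
  obtain ⟨c, hc, hf2⟩ := hd.f2_lb
  have hψ := d.smallAversion_isBigO_one
  have hU1 := hd.U1_bdd.isBigO_one
  have hσ := hd.sigmaTilde_bdd.isBigO_one
  have htime := isBigO_mul_of_isBigO_one hU1 (isBigO_mul_of_isBigO_one hd.whT_bdd.isBigO_one
    (isBigO_refl (fun q => q.2 ^ 2) _))
  have hpenalty := isBigO_mul_of_isBigO_one hU1 hd.penalty_sub_isBigO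
  have hvolatility := isBigO_mul_of_isBigO_one hd.Vss_bdd.isBigO_one
    (isBigO_sq_sub_sq_mul_add hψ hd.sb_bdd.isBigO_one hσ hU1 hd.wPsiY_sub_isBigO)
  have hdiffusion := isBigO_mul_of_isBigO_one d.boundedOnDomain_sq.isBigO_one
    (isBigO_sq_mul_sub hψ hd.sb_bdd.isBigO_one hσ
      (isBigO_mul_of_isBigO_one hU1 hd.wtSS_bdd.isBigO_one).neg_left hd.wPsiSS_sub_isBigO)
  refine ((htime.add hpenalty).add
    ((hvolatility.add hdiffusion).const_mul_left (1 / 2))).congr' ?_ .rfl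
  filter_upwards [eventually_smallAversion_of_forall hf2,
    eventually_smallAversion_of_forall hd.pde_wt] with q hq_f2 hq_pde
  rw [deltaHedgeResidual, Ham_Vs, wPsiT, wtT_eq_of_pde (hc.trans_le hq_f2).ne' hq_pde, sigmaPsi]
  ring

end FirstOrderAssumptions

theorem Assumptions.firstOrderAssumptions (hd : d.Assumptions) (hpde : d.PDEAssumptions) :
    d.FirstOrderAssumptions where
  V_derivS := hd.V_derivS
  V_derivSS := hd.V_derivSS
  f_deriv1 := hd.f_deriv1
  f_deriv2 := hd.f_deriv2
  f_deriv3 := hd.f_deriv3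
  U_deriv1 := hd.U_deriv1
  U_deriv2 := hd.U_deriv2
  U_deriv3 := hd.U_deriv3
  wt_deriv := hd.wt_deriv
  wh_deriv := hd.wh_deriv
  sb_bdd := ⟨d.K, fun t ht s hs _ _ => by
    have hsb := hd.sb_mem t (Ioo_subset_Icc_self ht) s (Ioo_subset_Icc_self hs)
    exact (abs_of_nonneg hsb.1).trans_le hsb.2⟩
  Vss_bdd := ⟨d.K, fun t ht s hs _ _ => hd.Vss_bdd t ht s hs⟩
  f_min := hd.f_min
  f2_lb := ⟨1 / d.K, one_div_pos.2 (one_pos.trans hd.hK), fun t ht s hs y hy =>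
    (hd.f2_bdd t ht s hs y hy _
      (hd.sb_mem t (Ioo_subset_Icc_self ht) s (Ioo_subset_Icc_self hs))).1⟩
  f3_bdd := ⟨d.eps, hd.heps, d.K, fun t ht s hs y hy ς hς => by
    have hlb := hd.sb_lb t (Ioo_subset_Icc_self ht) s hs
    have hub := hd.sb_ub t (Ioo_subset_Icc_self ht) s hs
    have hς_bounds := abs_le.1 hς
    exact (hd.f34_bdd t ht s hs y hy ς ⟨by linarith, by linarith⟩).1⟩
  wt_bdd := boundedOnDomain_of_continuousOn hd.wt_cont
  wtY_bdd := ⟨d.K, hd.wt_bdd d.wtY (by simp)⟩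
  wtSS_bdd := ⟨d.K, hd.wt_bdd d.wtSS (by simp)⟩
  wh_bdd := boundedOnDomain_of_continuousOn hd.wh_cont
  whT_bdd := ⟨d.K, hd.wh_bdd d.whT (by simp)⟩
  whY_bdd := ⟨d.K, hd.wh_bdd d.whY (by simp)⟩
  whSS_bdd := ⟨d.K, hd.wh_bdd d.whSS (by simp)⟩
  pde_wt := hpde.pde_wt

end HedgeData

theorem hjbi_first_order_general (d : HedgeData) (hd : d.FirstOrderAssumptions) :
    ∃ C > (0:ℝ), ∃ ψ₀ > (0:ℝ),
      ∀ t ∈ Ioo (0:ℝ) d.T, ∀ s ∈ Ioo d.K⁻¹ d.K, ∀ y ∈ Ioo d.yl d.yu, ∀ ψ ∈ Ioo (0:ℝ) ψ₀,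
        |d.wPsiT ψ t s y + d.Ham ψ t s y (d.Vs t s) (d.sigmaPsi ψ t s y)| ≤ C * ψ ^ 2 := by
  obtain ⟨C, hC, ψ₀, hψ₀, hbound⟩ :=
    exists_forall_abs_le_of_isBigO_principal_prod (D := d.domain) (n := 2)
      (g := fun p ψ => d.deltaHedgeResidual ψ p.1 p.2.1 p.2.2) hd.deltaHedgeResidual_isBigO
  exact ⟨C, hC, ψ₀, hψ₀, fun t ht s hs y hy => hbound (t, s, y) ⟨ht, hs, hy⟩⟩

/-- **First-order approximate solution property of the HJBI equation along the delta hedge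
and candidate volatility:** there are `C > 0` and `ψ₀ > 0` such that for all `(t,s,y) ∈ D`
and `ψ ∈ (0,ψ₀)`, `|w^ψ_t + H^ψ(t,s,y; V̄_s(t,s), σ^ψ(t,s,y))| ≤ C ψ²`. -/
theorem hjbi_first_order (d : HedgeData) (hd : d.Assumptions) (hpde : d.PDEAssumptions) :
    ∃ C > (0:ℝ), ∃ ψ₀ > (0:ℝ),
      ∀ t ∈ Ioo (0:ℝ) d.T, ∀ s ∈ Ioo d.K⁻¹ d.K, ∀ y ∈ Ioo d.yl d.yu, ∀ ψ ∈ Ioo (0:ℝ) ψ₀,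
        |d.wPsiT ψ t s y + d.Ham ψ t s y (d.Vs t s) (d.sigmaPsi ψ t s y)| ≤ C * ψ ^ 2 :=
  hjbi_first_order_general d (hd.firstOrderAssumptions hpde)
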